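/- arXiv:1810.05545 — 9 statements merged into one kernel-verified Lean document; each statement's English description precedes it below -/
import Mathlib

section
/- (Existence of chirality for (4,1) adinkras.) For every quadruple A = (L_1,L_2,L_3,L_4) encoding a (4,1) valise adinkra, there exists a (necessarily unique) χ ∈ {1,−1} such that L_1ᵀ·L_2·L_3ᵀ·L_4 = −χ·1 and L_1·L_2ᵀ·L_3·L_4ᵀ = χ·1, where 1 is the 4×4 identity matrix. -/
open Matrix

/-- A signed permutation matrix: exactly one nonzero entry in each row and column,
that entry being `1` or `-1`. -/
def IsSignedPerm {n : ℕ} (M : Matrix (Fin n) (Fin n) ℤ) : Prop :=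
  (∀ i j, M i j = 0 ∨ M i j = 1 ∨ M i j = -1) ∧
  (∀ i, ∃! j, M i j ≠ 0) ∧
  (∀ j, ∃! i, M i j ≠ 0)

/-- The garden algebra relations for a family of `d × d` integer matrices. -/
def GardenRel {d N : ℕ} (L : Fin N → Matrix (Fin d) (Fin d) ℤ) : Prop :=
  ∀ I J : Fin N,
    (L I * (L J)ᵀ + L J * (L I)ᵀ =
      if I = J then (2 : ℤ) • (1 : Matrix (Fin d) (Fin d) ℤ) else 0) ∧
    ((L I)ᵀ * L J + (L J)ᵀ * L I =
      if I = J then (2 : ℤ) • (1 : Matrix (Fin d) (Fin d) ℤ) else 0)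

/-- The L-matrices of a (4,1) valise adinkra: a quadruple of 4×4 integer signed
permutation matrices satisfying the garden algebra relations. -/
def IsAdinkra (L : Fin 4 → Matrix (Fin 4) (Fin 4) ℤ) : Prop :=
  (∀ I, IsSignedPerm (L I)) ∧ GardenRel L

/-- A skew-symmetric integer matrix has zero diagonal. -/
lemma diag_eq_zero_of_transpose_eq_neg {n : Type*} {X : Matrix n n ℤ} (h : Xᵀ = -X) (i : n) :
    X i i = 0 := by
  have := congrFun (congrFun h i) i
  simp only [transpose_apply, neg_apply] at this
  omega

/-- A symmetric `4 × 4` matrix commuting with two anticommuting skew-symmetric complex structures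
is scalar. -/
lemma eq_smul_one_of_commute_quaternionic {A B S : Matrix (Fin 4) (Fin 4) ℤ}
    (hA : Aᵀ = -A) (hB : Bᵀ = -B) (hAA : A * A = -1) (hBB : B * B = -1)
    (hAB : B * A = -(A * B)) (hS : Sᵀ = S) (hSA : S * A = A * S) (hSB : S * B = B * S) :
    S = S 0 0 • (1 : Matrix (Fin 4) (Fin 4) ℤ) := by
  have hABt : (A * B)ᵀ = -(A * B) := by
    rw [transpose_mul, hA, hB, neg_mul_neg, hAB]
  have hSAB : S * (A * B) = A * B * S := by
    rw [← mul_assoc, hSA, mul_assoc, hSB, mul_assoc]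
  have hA0 := diag_eq_zero_of_transpose_eq_neg hA 0
  have hB0 := diag_eq_zero_of_transpose_eq_neg hB 0
  have hAB0 := diag_eq_zero_of_transpose_eq_neg hABt 0
  have skew_mul : ∀ {X : Matrix (Fin 4) (Fin 4) ℤ}, Xᵀ = -X → S * X = X * S →
      (X * S) 0 0 = 0 := fun hX hSX ↦
    diag_eq_zero_of_transpose_eq_neg (by rw [transpose_mul, hX, hS, mul_neg, hSX]) 0
  -- The first columns of `1, A, B, A * B` form an orthonormal basis.
  let F : Fin 4 → Matrix (Fin 4) (Fin 4) ℤ := ![1, A, B, A * B]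
  let M : Matrix (Fin 4) (Fin 4) ℤ := of fun i k ↦ F k i 0
  have hAAB : A * (A * B) = -B := by rw [← mul_assoc, hAA, neg_one_mul]
  have hABA : A * B * A = B := by rw [mul_assoc, hAB, mul_neg, hAAB, neg_neg]
  have hABB : A * B * B = -A := by rw [mul_assoc, hBB, mul_neg_one]
  have hBAB : B * (A * B) = A := by rw [← mul_assoc, hAB, neg_mul, hABB, neg_neg]
  have hABAB : A * B * (A * B) = -1 := by rw [mul_assoc, hBAB, hAA]
  have hMM : Mᵀ * M = 1 := by
    ext k l
    have : (Mᵀ * M) k l = ((F k)ᵀ * F l) 0 0 := by simp [mul_apply, M]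
    rw [this]
    fin_cases k <;> fin_cases l <;>
      simp [F, -transpose_mul, hABt, hA, hB, hAA, hBB, hAB, hAAB, hABA, hABB, hBAB, hABAB,
        hA0, hB0, hAB0]
  have hMS : ∀ k, (Mᵀ * S) k 0 = if k = 0 then S 0 0 else 0 := by
    intro k
    have : (Mᵀ * S) k 0 = ((F k)ᵀ * S) 0 0 := by simp [mul_apply, M]
    rw [this]
    fin_cases k <;>
      simp [F, -transpose_mul, hABt, hA, hB, skew_mul hA hSA, skew_mul hB hSB,
        skew_mul hABt hSAB]
  have hMM' : M * Mᵀ = 1 := mul_eq_one_comm.mp hMM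
  have hcol : ∀ i, S i 0 = (1 : Matrix (Fin 4) (Fin 4) ℤ) i 0 * S 0 0 := by
    intro i
    calc S i 0 = (M * (Mᵀ * S)) i 0 := by rw [← mul_assoc, hMM', one_mul]
      _ = _ := by rw [mul_apply]; simp [hMS, M, F]
  have hSF : ∀ k, S * F k = F k * S := by
    intro k
    fin_cases k <;> simp [F, hSA, hSB, hSAB]
  have hSM : S * M = S 0 0 • M := by
    ext i k
    calc (S * M) i k = (S * F k) i 0 := by simp [mul_apply, M]
      _ = ∑ j, F k i j * S j 0 := by rw [hSF, mul_apply]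
      _ = ∑ j, F k i j * (if j = 0 then S 0 0 else 0) :=
        Finset.sum_congr rfl fun j _ ↦ by rw [hcol j, one_apply, ite_mul, one_mul, zero_mul]
      _ = _ := by simp [M, mul_comm]
  calc S = S * M * Mᵀ := by rw [mul_assoc, hMM', mul_one]
    _ = _ := by rw [hSM, smul_mul, hMM']

theorem stmt3 (L : Fin 4 → Matrix (Fin 4) (Fin 4) ℤ) (hL : IsAdinkra L) :
    ∃! χ : ℤ, (χ = 1 ∨ χ = -1) ∧
      (L 0)ᵀ * L 1 * (L 2)ᵀ * L 3 = -(χ • (1 : Matrix (Fin 4) (Fin 4) ℤ)) ∧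
      L 0 * (L 1)ᵀ * L 2 * (L 3)ᵀ = χ • (1 : Matrix (Fin 4) (Fin 4) ℤ) := by
  obtain ⟨-, hG⟩ := hL
  have normL : ∀ I, L I * (L I)ᵀ = 1 := by
    intro I
    ext i j
    have := congrFun (congrFun (hG I I).1 i) j
    simp only [if_true, Matrix.add_apply, Matrix.smul_apply, smul_eq_mul] at this
    omega
  have normR : ∀ I, (L I)ᵀ * L I = 1 := fun I ↦ mul_eq_one_comm.mp (normL I)
  have anti : ∀ I J, I ≠ J → (L J)ᵀ * L I = -((L I)ᵀ * L J) := by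
    intro I J h
    have := (hG I J).2
    rw [if_neg h] at this
    exact eq_neg_of_add_eq_zero_right this
  have cancel : ∀ I (X : Matrix (Fin 4) (Fin 4) ℤ), L I * ((L I)ᵀ * X) = X := by
    intro I X
    rw [← mul_assoc, normL, one_mul]
  have cancel' : ∀ I (X : Matrix (Fin 4) (Fin 4) ℤ), (L I)ᵀ * (L I * X) = X := by
    intro I X
    rw [← mul_assoc, normR, one_mul]
  -- The products `(L 0)ᵀ * L I` are anticommuting skew-symmetric complex structures.
  have skew : ∀ I, 0 ≠ I → ((L 0)ᵀ * L I)ᵀ = -((L 0)ᵀ * L I) := by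
    intro I h
    rw [transpose_mul, transpose_transpose, anti 0 I h]
  have mulE : ∀ I J, 0 ≠ I → (L 0)ᵀ * L I * ((L 0)ᵀ * L J) = -((L I)ᵀ * L J) := by
    intro I J h
    rw [← neg_eq_iff_eq_neg, ← neg_mul, ← anti 0 I h, mul_assoc, cancel]
  have sq : ∀ I, 0 ≠ I → (L 0)ᵀ * L I * ((L 0)ᵀ * L I) = -1 := by
    intro I h
    rw [mulE I I h, normR]
  have comm : ∀ I J, 0 ≠ I → 0 ≠ J → I ≠ J →
      (L 0)ᵀ * L J * ((L 0)ᵀ * L I) = -((L 0)ᵀ * L I * ((L 0)ᵀ * L J)) := by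
    intro I J hI hJ h
    rw [mulE I J hI, mulE J I hJ, anti I J h]
  have h1 : (0 : Fin 4) ≠ 1 := by decide
  have h2 : (0 : Fin 4) ≠ 2 := by decide
  have h3 : (0 : Fin 4) ≠ 3 := by decide
  have first : (L 0)ᵀ * L 1 * (L 2)ᵀ * L 3 =
      -((L 0)ᵀ * L 1 * ((L 0)ᵀ * L 2) * ((L 0)ᵀ * L 3)) := by
    rw [mul_assoc _ ((L 0)ᵀ * L 2), mulE 2 3 h2, mul_neg, neg_neg, mul_assoc _ (L 2)ᵀ]
  have second : L 0 * (L 1)ᵀ * L 2 * (L 3)ᵀ =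
      L 0 * ((L 0)ᵀ * L 1 * ((L 0)ᵀ * L 2) * ((L 0)ᵀ * L 3)) * (L 0)ᵀ := by
    have h30 : (L 0)ᵀ * L 3 * (L 0)ᵀ = -(L 3)ᵀ := by
      rw [← neg_eq_iff_eq_neg, ← neg_mul, ← anti 0 3 h3, mul_assoc, normL, mul_one]
    rw [mulE 1 2 h1, mul_assoc (L 0) (L 1)ᵀ, mul_assoc (L 0) (_ * _) (L 0)ᵀ,
      mul_assoc _ ((L 0)ᵀ * L 3) (L 0)ᵀ, h30, neg_mul_neg,
      mul_assoc (L 0)]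
  have orth : ((L 0)ᵀ * L 1 * ((L 0)ᵀ * L 2) * ((L 0)ᵀ * L 3))ᵀ *
      ((L 0)ᵀ * L 1 * ((L 0)ᵀ * L 2) * ((L 0)ᵀ * L 3)) = 1 := by
    simp only [transpose_mul, transpose_transpose, mul_assoc, cancel, cancel', normR]
  rw [first, second]
  have sA := skew 1 h1
  have sB := skew 2 h2
  have sC := skew 3 h3
  have qA := sq 1 h1
  have qB := sq 2 h2
  have cBA := comm 1 2 h1 h2 (by decide)
  have cCA := comm 1 3 h1 h3 (by decide)
  have cCB := comm 2 3 h2 h3 (by decide)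
  have conj : ∀ χ : ℤ, L 0 * (χ • (1 : Matrix (Fin 4) (Fin 4) ℤ)) * (L 0)ᵀ = χ • 1 := by
    intro χ
    rw [Matrix.mul_smul, mul_one, Matrix.smul_mul, normL]
  generalize (L 0)ᵀ * L 1 = A at *
  generalize (L 0)ᵀ * L 2 = B at *
  generalize (L 0)ᵀ * L 3 = C at *
  have hS : A * B * C = (A * B * C) 0 0 • (1 : Matrix (Fin 4) (Fin 4) ℤ) := by
    have cBA' : ∀ X, B * (A * X) = -(A * (B * X)) := fun X ↦ by
      rw [← mul_assoc, cBA, neg_mul, mul_assoc]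
    apply eq_smul_one_of_commute_quaternionic sA sB qA qB cBA
    · simp only [transpose_mul, sA, sB, sC, neg_mul, mul_neg, neg_neg, mul_assoc,
        cCA, cCB, cBA']
    · simp only [mul_neg, neg_neg, mul_assoc, cCA, cBA']
    · simp only [mul_neg, mul_assoc, cCB, cBA']
  generalize (A * B * C) 0 0 = χ at hS
  rw [hS] at orth ⊢
  refine ⟨χ, ⟨?_, rfl, conj χ⟩, ?_⟩
  · rw [transpose_smul, transpose_one, Matrix.smul_mul, one_mul, smul_smul] at orth
    have := congrFun (congrFun orth 0) 0
    rw [Matrix.smul_apply, one_apply_eq, smul_eq_mul, mul_one] at this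
    exact mul_self_eq_one_iff.mp this
  · rintro ψ ⟨-, h, -⟩
    have := congrFun (congrFun (neg_injective h) 0) 0
    simp only [Matrix.smul_apply, one_apply_eq, smul_eq_mul, mul_one] at this
    exact this.symm
end

section
/- Let A = (L_1,L_2,L_3,L_4) encode a (4,1) valise adinkra with chirality χ, i.e., L_1ᵀ·L_2·L_3ᵀ·L_4 = −χ·1 with χ ∈ {1,−1}. Then L_1ᵀ·L_2 = χ·(L_3ᵀ·L_4), L_1ᵀ·L_3 = −χ·(L_2ᵀ·L_4), and L_1ᵀ·L_4 = χ·(L_2ᵀ·L_3). -/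
open Matrix

namespace GardenRel

variable {d N : ℕ} {L : Fin N → Matrix (Fin d) (Fin d) ℤ}

theorem transpose_mul_self (h : GardenRel L) (I : Fin N) : (L I)ᵀ * L I = 1 := by
  have h2 : (2 : ℤ) • ((L I)ᵀ * L I) = (2 : ℤ) • 1 := by
    rw [two_smul]
    simpa using (h I I).2
  exact smul_right_injective _ two_ne_zero h2

theorem transpose_mul_anticomm (h : GardenRel L) {I J : Fin N} (hIJ : I ≠ J) :
    (L I)ᵀ * L J = -((L J)ᵀ * L I) := by
  have := (h I J).2
  rw [if_neg hIJ] at this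
  exact eq_neg_of_add_eq_zero_left this

theorem mul_transpose_anticomm (h : GardenRel L) {I J : Fin N} (hIJ : I ≠ J) :
    L I * (L J)ᵀ = -(L J * (L I)ᵀ) := by
  have := (h I J).1
  rw [if_neg hIJ] at this
  exact eq_neg_of_add_eq_zero_left this

theorem transpose_mul_sq (h : GardenRel L) {I J : Fin N} (hIJ : I ≠ J) :
    (L I)ᵀ * L J * ((L I)ᵀ * L J) = -1 := by
  calc (L I)ᵀ * L J * ((L I)ᵀ * L J)
      = -((L J)ᵀ * (L I * (L I)ᵀ) * L J) := by
        nth_rewrite 1 [h.transpose_mul_anticomm hIJ]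
        noncomm_ring
    _ = -1 := by
        rw [mul_eq_one_comm.mp (h.transpose_mul_self I), mul_one, h.transpose_mul_self J]

theorem eq_neg_smul_of_mul_eq_smul_one (h : GardenRel L) {I J : Fin N} (hIJ : I ≠ J)
    {A : Matrix (Fin d) (Fin d) ℤ} {c : ℤ} (hA : A * ((L I)ᵀ * L J) = c • 1) :
    A = -(c • ((L I)ᵀ * L J)) := by
  have := congrArg (· * ((L I)ᵀ * L J)) hA
  simp only [mul_assoc A, h.transpose_mul_sq hIJ, smul_mul_assoc, one_mul, mul_neg, mul_one] at this
  exact neg_eq_iff_eq_neg.mp this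

theorem mul_mul_mul_swap_middle (h : GardenRel L) {I J K M : Fin N} (hJK : J ≠ K) :
    (L I)ᵀ * L J * ((L K)ᵀ * L M) = -((L I)ᵀ * L K * ((L J)ᵀ * L M)) := by
  calc (L I)ᵀ * L J * ((L K)ᵀ * L M) = (L I)ᵀ * (L J * (L K)ᵀ) * L M := by noncomm_ring
    _ = -((L I)ᵀ * L K * ((L J)ᵀ * L M)) := by
      rw [h.mul_transpose_anticomm hJK]
      noncomm_ring

end GardenRel

theorem stmt4 (L : Fin 4 → Matrix (Fin 4) (Fin 4) ℤ) (hL : IsAdinkra L)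
    (χ : ℤ) (hχ : χ = 1 ∨ χ = -1)
    (hchir : (L 0)ᵀ * L 1 * (L 2)ᵀ * L 3 = -(χ • (1 : Matrix (Fin 4) (Fin 4) ℤ))) :
    (L 0)ᵀ * L 1 = χ • ((L 2)ᵀ * L 3) ∧
    (L 0)ᵀ * L 2 = -(χ • ((L 1)ᵀ * L 3)) ∧
    (L 0)ᵀ * L 3 = χ • ((L 1)ᵀ * L 2) := by
  have h := hL.2
  have h12 : (L 0)ᵀ * L 1 * ((L 2)ᵀ * L 3) = (-χ) • 1 := by
    rw [neg_smul, ← hchir, mul_assoc ((L 0)ᵀ * L 1)]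
  have h21 : (L 0)ᵀ * L 2 * ((L 1)ᵀ * L 3) = χ • 1 := by
    rw [h.mul_mul_mul_swap_middle (by decide), h12, neg_smul, neg_neg]
  have h31 : (L 0)ᵀ * L 3 * ((L 1)ᵀ * L 2) = (-χ) • 1 := by
    rw [h.transpose_mul_anticomm (I := 1) (J := 2) (by decide), mul_neg,
      h.mul_mul_mul_swap_middle (by decide), neg_neg,
      h.transpose_mul_anticomm (I := 3) (J := 1) (by decide), mul_neg, h21, neg_smul]
  refine ⟨?_, h.eq_neg_smul_of_mul_eq_smul_one (by decide) h21, ?_⟩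
  · simpa using h.eq_neg_smul_of_mul_eq_smul_one (by decide) h12
  · simpa using h.eq_neg_smul_of_mul_eq_smul_one (by decide) h31
end

section
/- Let A = (L_1,L_2,L_3,L_4) encode a (4,1) valise adinkra, and for I ≠ J let P_{IJ} denote the entrywise absolute value of the matrix L_Iᵀ·L_J. Then P_{12} = P_{34}, P_{13} = P_{24}, and P_{14} = P_{23}; the four matrices 1, P_{12}, P_{13}, P_{14} are pairwise distinct; P_{IJ}·P_{IJ} = 1 for all I ≠ J; and P_{12}·P_{13} = P_{14}, P_{13}·P_{14} = P_{12}, P_{12}·P_{14} = P_{13}. In particular, {1, P_{12}, P_{13}, P_{14}} is a group under matrix multiplication isomorphic to the Klein four-group. -/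
open Matrix

/-- Entrywise absolute value of an integer matrix. -/
def entrywiseAbs {n : ℕ} (M : Matrix (Fin n) (Fin n) ℤ) : Matrix (Fin n) (Fin n) ℤ :=
  Matrix.of fun i j => |M i j|

theorem IsSignedPerm.exists_entrywiseAbs_eq_permMatrix {n : ℕ} {M : Matrix (Fin n) (Fin n) ℤ}
    (hM : IsSignedPerm M) : ∃ σ : Equiv.Perm (Fin n), entrywiseAbs M = σ.permMatrix ℤ := by
  obtain ⟨hval, hrow, hcol⟩ := hM
  choose f hf hf_unique using hrow
  have hinj : Function.Injective f := fun i j hij =>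
    (hcol (f i)).unique (hf i) (hij ▸ hf j)
  refine ⟨Equiv.ofBijective f (Finite.injective_iff_bijective.mp hinj), ?_⟩
  ext i j
  by_cases hij : f i = j
  · subst hij
    rcases hval i (f i) with h | h | h
    · exact absurd h (hf i)
    all_goals simp [entrywiseAbs, Equiv.Perm.permMatrix, PEquiv.toMatrix_apply, h]
  · have h : M i j = 0 := by
      by_contra h
      exact hij (hf_unique i j h).symm
    simp [entrywiseAbs, Equiv.Perm.permMatrix, PEquiv.toMatrix_apply, h, hij]

theorem entrywiseAbs_transpose_mul {n : ℕ} {M : Matrix (Fin n) (Fin n) ℤ}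
    (hM : IsSignedPerm M) (N : Matrix (Fin n) (Fin n) ℤ) :
    entrywiseAbs (Mᵀ * N) = (entrywiseAbs M)ᵀ * entrywiseAbs N := by
  ext a b
  obtain ⟨k, -, hk⟩ := hM.2.2 a
  have hzero : ∀ i, i ≠ k → M i a = 0 := fun i hi => by
    by_contra h
    exact hi (hk i h)
  simp only [entrywiseAbs, Matrix.of_apply, Matrix.mul_apply, Matrix.transpose_apply]
  rw [Finset.sum_eq_single k, Finset.sum_eq_single k, abs_mul]
  all_goals simp +contextual [hzero]

theorem transpose_permMatrix_mul_permMatrix {n : ℕ} (σ τ : Equiv.Perm (Fin n)) :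
    (σ.permMatrix ℤ)ᵀ * τ.permMatrix ℤ = (τ * σ⁻¹).permMatrix ℤ := by
  rw [Matrix.transpose_permMatrix, Matrix.permMatrix_mul]

theorem permMatrix_injective {n : ℕ} :
    Function.Injective fun σ : Equiv.Perm (Fin n) => σ.permMatrix ℤ := by
  intro σ τ h
  ext i
  have hi := congrFun (congrFun h i) (σ i)
  by_contra hne
  have hne' : τ i ≠ σ i := fun e => hne (congrArg Fin.val e.symm)
  simp [Equiv.Perm.permMatrix, PEquiv.toMatrix_apply, hne'] at hi

/-- If the absolute value of a skew-symmetric matrix is a permutation matrix, the permutation is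
a fixed-point-free involution. -/
theorem involutive_of_skew {n : ℕ} {M : Matrix (Fin n) (Fin n) ℤ} {σ : Equiv.Perm (Fin n)}
    (hskew : M + Mᵀ = 0) (hσ : entrywiseAbs M = σ.permMatrix ℤ) :
    σ * σ = 1 ∧ ∀ i, σ i ≠ i := by
  have hentry (i j : Fin n) : |M i j| = if σ i = j then 1 else 0 := by
    have := congrFun (congrFun hσ i) j
    simpa [entrywiseAbs, Equiv.Perm.permMatrix, PEquiv.toMatrix_apply, eq_comm] using this
  have hneg (i j : Fin n) : M i j + M j i = 0 := congrFun (congrFun hskew i) j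
  constructor
  · ext i
    have habs : |M (σ i) i| = |M i (σ i)| := by
      rw [eq_neg_of_add_eq_zero_left (hneg (σ i) i), abs_neg]
    rw [hentry, hentry, if_pos rfl] at habs
    have hfix : σ (σ i) = i := by
      by_contra h
      simp [h] at habs
    exact congrArg Fin.val hfix
  · intro i h
    have hdiag := hentry i i
    rw [if_pos h, show M i i = 0 by have := hneg i i; omega] at hdiag
    simp at hdiag

set_option synthInstance.maxSize 1000 in
/-- Of three fixed-point-free involutions of four points that pairwise agree nowhere, the third is
the product of the other two. -/
theorem klein_four_of_fixedPointFree :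
    ∀ p : Equiv.Perm (Fin 4), (p * p = 1 ∧ ∀ i, p i ≠ i) →
    ∀ q : Equiv.Perm (Fin 4), (q * q = 1 ∧ ∀ i, q i ≠ i) → (∀ i, q i ≠ p i) →
    ∀ r : Equiv.Perm (Fin 4), (r * r = 1 ∧ ∀ i, r i ≠ i) → (∀ i, r i ≠ p i) →
      (∀ i, r i ≠ q i) → q * p = r := by
  decide +kernel

theorem stmt5 (L : Fin 4 → Matrix (Fin 4) (Fin 4) ℤ) (hL : IsAdinkra L)
    (P : Fin 4 → Fin 4 → Matrix (Fin 4) (Fin 4) ℤ)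
    (hP : ∀ I J : Fin 4, I ≠ J → P I J = entrywiseAbs ((L I)ᵀ * L J)) :
    (P 0 1 = P 2 3 ∧ P 0 2 = P 1 3 ∧ P 0 3 = P 1 2) ∧
    ([(1 : Matrix (Fin 4) (Fin 4) ℤ), P 0 1, P 0 2, P 0 3].Pairwise (· ≠ ·)) ∧
    (∀ I J : Fin 4, I ≠ J → P I J * P I J = 1) ∧
    (P 0 1 * P 0 2 = P 0 3 ∧ P 0 2 * P 0 3 = P 0 1 ∧ P 0 1 * P 0 3 = P 0 2) := by
  obtain ⟨hsigned, hrel⟩ := hL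
  choose σ hσ using fun I => (hsigned I).exists_entrywiseAbs_eq_permMatrix
  have habs (I J : Fin 4) : entrywiseAbs ((L I)ᵀ * L J) = (σ J * (σ I)⁻¹).permMatrix ℤ := by
    rw [entrywiseAbs_transpose_mul (hsigned I), hσ, hσ, transpose_permMatrix_mul_permMatrix]
  have hinv (I J : Fin 4) (hIJ : I ≠ J) :
      (σ J * (σ I)⁻¹) * (σ J * (σ I)⁻¹) = 1 ∧ ∀ i, (σ J * (σ I)⁻¹) i ≠ i := by
    refine involutive_of_skew ?_ (habs I J)
    simpa [hIJ, Matrix.transpose_mul] using (hrel I J).2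
  have hperm (I J : Fin 4) (hIJ : I ≠ J) : P I J = (σ J * (σ I)⁻¹).permMatrix ℤ :=
    (hP I J hIJ).trans (habs I J)
  have hfree (I J : Fin 4) (hIJ : I ≠ J) (i : Fin 4) :
      (σ J * (σ 0)⁻¹) i ≠ (σ I * (σ 0)⁻¹) i := by
    simpa using (hinv I J hIJ).2 ((σ I * (σ 0)⁻¹) i)
  have hsq (I J : Fin 4) (hIJ : I ≠ J) : P I J * P I J = 1 := by
    rw [hperm I J hIJ, ← Matrix.permMatrix_mul, (hinv I J hIJ).1, Matrix.permMatrix_one]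
  obtain ⟨p, hp⟩ : ∃ p, p = σ 1 * (σ 0)⁻¹ := ⟨_, rfl⟩
  obtain ⟨q, hq⟩ : ∃ q, q = σ 2 * (σ 0)⁻¹ := ⟨_, rfl⟩
  obtain ⟨r, hr⟩ : ∃ r, r = σ 3 * (σ 0)⁻¹ := ⟨_, rfl⟩
  have hp1 := hinv 0 1 (by decide)
  have hq1 := hinv 0 2 (by decide)
  have hr1 := hinv 0 3 (by decide)
  have hpq := hfree 1 2 (by decide)
  have hpr := hfree 1 3 (by decide)
  have hqr := hfree 2 3 (by decide)
  have h12 : σ 2 * (σ 1)⁻¹ = q * p⁻¹ := by simp [hp, hq]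
  have h13 : σ 3 * (σ 1)⁻¹ = r * p⁻¹ := by simp [hp, hr]
  have h23 : σ 3 * (σ 2)⁻¹ = r * q⁻¹ := by simp [hq, hr]
  rw [← hp] at hp1 hpq hpr
  rw [← hq] at hq1 hpq hqr
  rw [← hr] at hr1 hpr hqr
  have hqp := klein_four_of_fixedPointFree p hp1 q hq1 hpq r hr1 hpr hqr
  have hrp := klein_four_of_fixedPointFree p hp1 r hr1 hpr q hq1 hpq
    fun i => (hqr i).symm
  have hrq := klein_four_of_fixedPointFree q hq1 r hr1 hqr p hp1
    (fun i => (hpq i).symm) fun i => (hpr i).symm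
  have ne_of_apply {s t : Equiv.Perm (Fin 4)} (h : s 0 ≠ t 0) :
      t.permMatrix ℤ ≠ s.permMatrix ℤ := fun e =>
    h (DFunLike.congr_fun (permMatrix_injective e).symm 0)
  refine ⟨?_, ?_, hsq, ?_⟩
  · rw [hperm 0 1 (by decide), hperm 2 3 (by decide), hperm 0 2 (by decide),
      hperm 1 3 (by decide), hperm 0 3 (by decide), hperm 1 2 (by decide), h12, h13, h23,
      ← hp, ← hq, ← hr, inv_eq_of_mul_eq_one_left hp1.1, inv_eq_of_mul_eq_one_left hq1.1,
      hqp, hrp, hrq]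
    exact ⟨rfl, rfl, rfl⟩
  · rw [hperm 0 1 (by decide), hperm 0 2 (by decide), hperm 0 3 (by decide), ← hp, ← hq, ← hr,
      ← Matrix.permMatrix_one]
    simp only [List.pairwise_cons, List.mem_cons, List.not_mem_nil, or_false, forall_eq_or_imp,
      forall_eq, List.Pairwise.nil, and_true, false_imp_iff, implies_true]
    exact ⟨⟨ne_of_apply (t := 1) (hp1.2 0), ne_of_apply (t := 1) (hq1.2 0),
      ne_of_apply (t := 1) (hr1.2 0)⟩, ⟨ne_of_apply (hpq 0), ne_of_apply (hpr 0)⟩,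
      ne_of_apply (hqr 0)⟩
  · rw [hperm 0 1 (by decide), hperm 0 2 (by decide), hperm 0 3 (by decide), ← hp, ← hq, ← hr,
      ← Matrix.permMatrix_mul, ← Matrix.permMatrix_mul, ← Matrix.permMatrix_mul, hqp, hrq, hrp]
    exact ⟨rfl, rfl, rfl⟩
end

section
/- Let V = ZMod 2 × ZMod 2 and let (σ_0,σ_1,σ_2,σ_3) be a quadruple of permutations of V such that for all I ≠ J the permutation σ_J ∘ σ_I⁻¹ is a fixed-point-free involution. Then there exists a unique pair (ρ_B, ρ_F) of permutations of V with ρ_F((0,0)) = (0,0) such that σ_I = ρ_F ∘ σ⁰_I ∘ ρ_B⁻¹ for all I ∈ {0,1,2,3}, where σ⁰_I(v) = v + t(I) is the standard chromotopology. -/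
/-- Labels of the four colors by elements of `ZMod 2 × ZMod 2`. -/
def tEnum : Fin 4 → ZMod 2 × ZMod 2 := ![(0, 0), (0, 1), (1, 0), (1, 1)]

/-- The quadruple of permutations encoding a labeled (4,1) chromotopology:
for all distinct colors `I, J`, the permutation `σ_J ∘ σ_I⁻¹` is a
fixed-point-free involution. -/
def IsChromo {V : Type*} (σ : Fin 4 → Equiv.Perm V) : Prop :=
  ∀ I J : Fin 4, I ≠ J →
    (σ J * (σ I)⁻¹) * (σ J * (σ I)⁻¹) = 1 ∧ ∀ v : V, (σ J * (σ I)⁻¹) v ≠ v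

theorem tEnum_bijective : Function.Bijective tEnum := by
  unfold tEnum
  decide

theorem klein_eq_add_of_ne : ∀ u v w : ZMod 2 × ZMod 2,
    u ≠ 0 → v ≠ 0 → u ≠ v → w ≠ 0 → w ≠ u → w ≠ v → w = u + v := by
  decide

/-- A family of involutions of a set, indexed by the Klein four-group, whose orbit map at `x`
is bijective acts on that orbit by translations. -/
theorem klein_family_apply_apply {X : Type*} (p : ZMod 2 × ZMod 2 → Equiv.Perm X) (x : X)
    (hzero : p 0 = 1) (hinv : ∀ v y, p v (p v y) = y) (hfix : ∀ v, v ≠ 0 → ∀ y, p v y ≠ y)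
    (hbij : Function.Bijective fun v => p v x) (u v : ZMod 2 × ZMod 2) :
    p u (p v x) = p (u + v) x := by
  have h0 : p 0 x = x := by simp [hzero]
  by_cases huv : u = v
  · subst huv
    rw [hinv, CharTwo.add_self_eq_zero, h0]
  by_cases hu : u = 0
  · simp [hu, hzero]
  by_cases hv : v = 0
  · simp [hv, hzero]
  obtain ⟨w, hw⟩ := hbij.2 (p u (p v x))
  have hw : p w x = p u (p v x) := hw
  rw [← klein_eq_add_of_ne u v w hu hv huv, hw]
  · rintro rfl
    refine huv (hbij.1 ?_)
    change p u x = p v x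
    rw [← hinv u (p v x), ← hw, h0]
  · rintro rfl
    exact hfix v hv x ((p w).injective hw).symm
  · rintro rfl
    exact hfix u hu _ hw.symm

theorem stmt6 (σ : Fin 4 → Equiv.Perm (ZMod 2 × ZMod 2)) (hσ : IsChromo σ) :
    ∃! ρ : Equiv.Perm (ZMod 2 × ZMod 2) × Equiv.Perm (ZMod 2 × ZMod 2),
      ρ.2 (0, 0) = (0, 0) ∧
      ∀ I : Fin 4, σ I = ρ.2 * (Equiv.addRight (tEnum I)) * ρ.1⁻¹ := by
  let e := Equiv.ofBijective tEnum tEnum_bijective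
  have he0 : e 0 = 0 := rfl
  have he0' : e.symm 0 = 0 := e.symm_apply_eq.2 he0.symm
  let p : ZMod 2 × ZMod 2 → Equiv.Perm (ZMod 2 × ZMod 2) := fun v => σ (e.symm v) * (σ 0)⁻¹
  have hzero : p 0 = 1 := by simp [p, he0']
  have hne : ∀ v, v ≠ 0 → 0 ≠ e.symm v := fun v hv h =>
    hv (e.symm.injective (h.symm.trans he0'.symm))
  have hfix : ∀ v, v ≠ 0 → ∀ y, p v y ≠ y := fun v hv => (hσ _ _ (hne v hv)).2
  have hinv : ∀ v y, p v (p v y) = y := fun v y => by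
    by_cases hv : v = 0
    · simp [hv, hzero]
    · exact Equiv.congr_fun (hσ _ _ (hne v hv)).1 y
  have hbij : Function.Bijective fun v => p v 0 := by
    refine Finite.injective_iff_bijective.1 fun u v huv => ?_
    by_contra h
    refine (hσ (e.symm u) (e.symm v) (e.symm.injective.ne h)).2 (p u 0) ?_
    refine Eq.trans ?_ huv.symm
    simp [p]
  have key := klein_family_apply_apply p 0 hzero hinv hfix hbij
  have hp : ∀ I, p (tEnum I) = σ I * (σ 0)⁻¹ := fun I => by
    change σ (e.symm (e I)) * _ = _
    rw [e.symm_apply_apply]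
  let f := Equiv.ofBijective _ hbij
  have hf : ∀ v, f v = p v 0 := fun _ => rfl
  refine ⟨((σ 0)⁻¹ * f, f), ⟨?_, fun I => ?_⟩, ?_⟩
  · change p 0 0 = 0
    simp [hzero]
  · have h : p (tEnum I) * f = f * Equiv.addRight (tEnum I) := by
      ext1 v
      simp only [Equiv.Perm.mul_apply, hf, Equiv.coe_addRight, key, add_comm]
    rw [← h, hp]
    group
  · rintro ⟨b, g⟩ ⟨hg, h⟩
    dsimp only at hg h
    have h0 : σ 0 = g * b⁻¹ := by
      have h1 : Equiv.addRight (tEnum 0) = 1 := Equiv.addRight_zero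
      rw [h 0, h1, mul_one]
    have hgf : g = f := by
      ext1 v
      obtain ⟨I, rfl⟩ := tEnum_bijective.2 v
      have hg' : g.symm 0 = 0 := g.symm_apply_eq.2 hg.symm
      rw [hf, hp, h I, h0]
      simp [hg']
    rw [← hgf, h0]
    simp
end

section
/- The number of quadruples (σ_0,σ_1,σ_2,σ_3) of permutations of a 4-element set such that for all I ≠ J the permutation σ_J ∘ σ_I⁻¹ is a fixed-point-free involution is exactly 144. (Equivalently, there are exactly 144 labeled (4,1) chromotopologies.) -/
/-- The predicate that a permutation is a fixed-point-free involution. -/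
abbrev IsFreeInvolution {V : Type*} (τ : Equiv.Perm V) : Prop :=
  τ * τ = 1 ∧ ∀ v : V, τ v ≠ v

theorem card_isFreeInvolution_fin_four :
    Fintype.card {τ : Equiv.Perm (Fin 4) // IsFreeInvolution τ} = 3 := by
  decide

/-- The fixed-point-free involutions of a 4-element set, together with the identity, form the
Klein four-group: the quotient of two distinct ones is again one. -/
theorem IsFreeInvolution.mul_inv_of_ne :
    ∀ a b : {τ : Equiv.Perm (Fin 4) // IsFreeInvolution τ}, a ≠ b →
      IsFreeInvolution (b.1 * a.1⁻¹) := by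
  decide

theorem IsFreeInvolution.inv {V : Type*} {τ : Equiv.Perm V} (h : IsFreeInvolution τ) :
    IsFreeInvolution τ⁻¹ := by
  rwa [inv_eq_of_mul_eq_one_left h.1]

theorem IsChromo.apply_ne_apply {V : Type*} [Nonempty V] {σ : Fin 4 → Equiv.Perm V}
    (h : IsChromo σ) {I J : Fin 4} (hIJ : I ≠ J) : σ I ≠ σ J := fun he =>
  (h I J hIJ).2 (Classical.arbitrary V) (by simp [he])

theorem isChromo_cons (p : Equiv.Perm (Fin 4))
    (e : Fin 3 ↪ {τ : Equiv.Perm (Fin 4) // IsFreeInvolution τ}) :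
    IsChromo (Fin.cons p fun i => (e i).1 * p : Fin 4 → Equiv.Perm (Fin 4)) := by
  intro I J hIJ
  change IsFreeInvolution _
  induction I using Fin.cases with
  | zero =>
    induction J using Fin.cases with
    | zero => exact absurd rfl hIJ
    | succ j => simpa only [Fin.cons_zero, Fin.cons_succ, mul_inv_cancel_right] using (e j).2
  | succ i =>
    induction J using Fin.cases with
    | zero =>
      simpa only [Fin.cons_zero, Fin.cons_succ, mul_inv_rev, mul_inv_cancel_left] using (e i).2.inv
    | succ j =>
      have hne : e i ≠ e j := fun h => hIJ (congrArg Fin.succ (e.injective h))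
      simpa only [Fin.cons_succ, mul_inv_rev, mul_assoc, mul_inv_cancel_left] using
        IsFreeInvolution.mul_inv_of_ne _ _ hne

/-- A labeled chromotopology amounts to its first permutation `σ₀` together with the three
distinct fixed-point-free involutions `σᵢ ∘ σ₀⁻¹`. -/
def chromoEquiv : {σ : Fin 4 → Equiv.Perm (Fin 4) // IsChromo σ} ≃
    Equiv.Perm (Fin 4) × (Fin 3 ↪ {τ : Equiv.Perm (Fin 4) // IsFreeInvolution τ}) where
  toFun σ := (σ.1 0,
    { toFun := fun i => ⟨σ.1 i.succ * (σ.1 0)⁻¹, σ.2 0 i.succ (Fin.succ_ne_zero i).symm⟩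
      inj' := fun i j h => by
        by_contra hij
        exact σ.2.apply_ne_apply (fun hs => hij (Fin.succ_injective _ hs))
          (mul_right_cancel (congrArg Subtype.val h)) })
  invFun x := ⟨Fin.cons x.1 fun i => (x.2 i).1 * x.1, isChromo_cons x.1 x.2⟩
  left_inv σ := by
    ext1
    funext I
    induction I using Fin.cases <;> simp [DFunLike.coe]
  right_inv x := by
    refine Prod.ext rfl ?_
    ext i : 2
    simp

theorem stmt7 : Nat.card {σ : Fin 4 → Equiv.Perm (Fin 4) // IsChromo σ} = 144 := by
  rw [Nat.card_congr chromoEquiv, Nat.card_eq_fintype_card, Fintype.card_prod,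
    Fintype.card_embedding_eq, card_isFreeInvolution_fin_four, Fintype.card_perm]
  simp [Nat.factorial, Nat.descFactorial]
end

section
/- The number of odd dashings of the standard (4,1) chromotopology is exactly 256; that is, the number of functions d : V × V → ZMod 2 (with V = ZMod 2 × ZMod 2) such that for every b ∈ V and all distinct s, u ∈ V one has d(b, b+s) + d(b+s+u, b+s) + d(b+s+u, b+u) + d(b, b+u) = 1 in ZMod 2, equals 256. -/
/-- An odd dashing of the standard (4,1) chromotopology: a function
`d : V × V → ZMod 2` (with `V = ZMod 2 × ZMod 2`, `d (b, f)` recording whether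
the edge joining boson `b` to fermion `f` is dashed) such that every 2-colored
4-cycle carries an odd number of dashes. -/
def IsOddDashing (d : (ZMod 2 × ZMod 2) × (ZMod 2 × ZMod 2) → ZMod 2) : Prop :=
  ∀ b s u : ZMod 2 × ZMod 2, s ≠ u →
    d (b, b + s) + d (b + s + u, b + s) + d (b + s + u, b + u) + d (b, b + u) = 1

/-- The bilinear forms on `ZMod 2 × ZMod 2` with diagonal `1` off the origin: the quadratic form
`x² + xy + y²` is anisotropic, and `e` parametrizes the bilinear forms inducing it. -/
def anisotropicForm (e : ZMod 2) (b f : ZMod 2 × ZMod 2) : ZMod 2 :=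
  b.1 * f.1 + b.2 * f.2 + (e + 1) * (b.1 * f.2) + e * (b.2 * f.1)

/-- The dashing obtained from an anisotropic form by vertex switches. The boson switches are `α`;
the fermion switches are normalized to vanish at `0`, with polynomial coefficients `x`, `y`, `z`. -/
def switchedDashing (α : ZMod 2 × ZMod 2 → ZMod 2) (x y z e : ZMod 2)
    (p : (ZMod 2 × ZMod 2) × (ZMod 2 × ZMod 2)) : ZMod 2 :=
  α p.1 + (x * p.2.1 + y * p.2.2 + z * (p.2.1 * p.2.2)) + anisotropicForm e p.1 p.2

theorem anisotropicForm_cycle : ∀ (e : ZMod 2) (b s u : ZMod 2 × ZMod 2), s ≠ u →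
    anisotropicForm e b (b + s) + anisotropicForm e (b + s + u) (b + s) +
      anisotropicForm e (b + s + u) (b + u) + anisotropicForm e b (b + u) = 1 := by
  unfold anisotropicForm
  decide

theorem isOddDashing_switchedDashing (α : ZMod 2 × ZMod 2 → ZMod 2) (x y z e : ZMod 2) :
    IsOddDashing (switchedDashing α x y z e) := by
  intro b s u hsu
  have h := anisotropicForm_cycle e b s u hsu
  have two_eq_zero : (2 : ZMod 2) = 0 := rfl
  simp only [switchedDashing]
  generalize x * (b + s).1 + y * (b + s).2 + z * ((b + s).1 * (b + s).2) = β
  generalize x * (b + u).1 + y * (b + u).2 + z * ((b + u).1 * (b + u).2) = γ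
  linear_combination h + (α b + α (b + s + u) + β + γ) * two_eq_zero

/-- An odd dashing is determined by its values on the edges at fermion `0`, on the edges at
boson `0`, and on one further edge. -/
theorem IsOddDashing.eq_switchedDashing {d : (ZMod 2 × ZMod 2) × (ZMod 2 × ZMod 2) → ZMod 2}
    (hd : IsOddDashing d) :
    switchedDashing (fun b => d (b, 0)) (d (0, (1, 0)) + d (0, 0)) (d (0, (0, 1)) + d (0, 0))
      (d (0, (1, 1)) + d (0, (1, 0)) + d (0, (0, 1)) + d (0, 0))
      (d ((0, 1), (1, 0)) + d ((0, 1), 0) + d (0, (1, 0)) + d (0, 0)) = d := by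
  have cycle : ∀ b f w : ZMod 2 × ZMod 2, w ≠ 0 →
      d (b, f) + d (b + w, f) + d (b + w, f + w) + d (b, f + w) = 1 := by
    intro b f w hw
    have h := hd b (b + f) (b + f + w) (by simpa using hw)
    have e₁ : b + (b + f) = f := by rw [← add_assoc, CharTwo.add_self_eq_zero, zero_add]
    have e₂ : b + (b + f + w) = f + w := by rw [← add_assoc, e₁]
    have e₃ : b + (b + f) + (b + f + w) = b + w := by
      rw [e₁, add_comm b f, add_assoc, ← add_assoc, CharTwo.add_self_eq_zero, zero_add]
    rwa [e₃, e₁, e₂] at h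
  have h₁ := cycle 0 0 (0, 1) (by decide)
  have h₂ := cycle 0 0 (1, 0) (by decide)
  have h₃ := cycle 0 0 (1, 1) (by decide)
  have h₄ := cycle 0 (1, 0) (0, 1) (by decide)
  have h₅ := cycle 0 (0, 1) (1, 0) (by decide)
  have h₆ := cycle 0 (0, 1) (1, 1) (by decide)
  have h₇ := cycle (0, 1) 0 (1, 0) (by decide)
  have h₈ := cycle (1, 0) 0 (0, 1) (by decide)
  have one_add_one : (1 + 1 : ZMod 2) = 0 := rfl
  simp only [Prod.mk_add_mk, zero_add, add_zero, one_add_one, ← Prod.mk_zero_zero]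
    at h₁ h₂ h₃ h₄ h₅ h₆ h₇ h₈
  funext ⟨⟨b₁, b₂⟩, ⟨f₁, f₂⟩⟩
  have zero_or_one : ∀ a : ZMod 2, a = 0 ∨ a = 1 := by decide
  simp only [switchedDashing, anisotropicForm, ← Prod.mk_zero_zero]
  rcases zero_or_one b₁ with rfl | rfl <;> rcases zero_or_one b₂ with rfl | rfl <;>
    rcases zero_or_one f₁ with rfl | rfl <;> rcases zero_or_one f₂ with rfl | rfl <;> grind

/-- Odd dashings are parametrized by boson switches, normalized fermion switches and one bit
selecting the anisotropic form. -/
def oddDashingEquiv :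
    {d : (ZMod 2 × ZMod 2) × (ZMod 2 × ZMod 2) → ZMod 2 // IsOddDashing d} ≃
      (ZMod 2 × ZMod 2 → ZMod 2) × ZMod 2 × ZMod 2 × ZMod 2 × ZMod 2 where
  toFun d := (fun b => d.1 (b, 0), d.1 (0, (1, 0)) + d.1 (0, 0), d.1 (0, (0, 1)) + d.1 (0, 0),
    d.1 (0, (1, 1)) + d.1 (0, (1, 0)) + d.1 (0, (0, 1)) + d.1 (0, 0),
    d.1 ((0, 1), (1, 0)) + d.1 ((0, 1), 0) + d.1 (0, (1, 0)) + d.1 (0, 0))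
  invFun p := ⟨switchedDashing p.1 p.2.1 p.2.2.1 p.2.2.2.1 p.2.2.2.2,
    isOddDashing_switchedDashing _ _ _ _ _⟩
  left_inv d := Subtype.ext d.2.eq_switchedDashing
  right_inv := by
    rintro ⟨α, x, y, z, e⟩
    simp only [switchedDashing, anisotropicForm, Prod.mk.injEq, Prod.fst_zero, Prod.snd_zero]
    refine ⟨?_, ?_, ?_, ?_, ?_⟩
    · funext b
      ring
    all_goals grind

theorem stmt8 :
    Nat.card {d : (ZMod 2 × ZMod 2) × (ZMod 2 × ZMod 2) → ZMod 2 // IsOddDashing d}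
      = 256 := by
  rw [Nat.card_congr oddDashingEquiv]
  simp
end

section
/- For each χ ∈ ZMod 2, the map sending a dashing d to the 7-tuple (d((0,0),(0,0)), d((0,1),(0,1)), d((1,0),(1,0)), d((1,1),(1,1)), d((0,0),(0,1)), d((0,0),(1,0)), d((0,0),(1,1))) restricts to a bijection from the set of odd dashings d of the standard (4,1) chromotopology satisfying S(d) = χ onto (ZMod 2)⁷. In other words, the dashings of the four color-0 edges and of the three remaining edges incident to the boson (0,0) may be chosen freely, and each such choice, together with a prescribed chirality value, extends in a unique way to an odd dashing. -/
/-- The chirality sum of a dashing: the total dash parity of the closed path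
starting at the boson `(0,0)` and following colors `0, 1, 2, 3` in order. -/
def chiralitySum (d : (ZMod 2 × ZMod 2) × (ZMod 2 × ZMod 2) → ZMod 2) : ZMod 2 :=
  d ((0, 0), (0, 0)) + d ((0, 1), (0, 0)) + d ((0, 1), (1, 1)) + d ((0, 0), (1, 1))

/-- The seven free edge dashings: the four color-0 edges and the three remaining
edges incident to the boson `(0,0)`. -/
def freeEdges (d : (ZMod 2 × ZMod 2) × (ZMod 2 × ZMod 2) → ZMod 2) :
    Fin 7 → ZMod 2 :=
  ![d ((0, 0), (0, 0)), d ((0, 1), (0, 1)), d ((1, 0), (1, 0)), d ((1, 1), (1, 1)),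
    d ((0, 0), (0, 1)), d ((0, 0), (1, 0)), d ((0, 0), (1, 1))]

/-- The odd dashing of chirality `χ` that leaves undashed all color-0 edges and all edges
incident to the boson `(0,0)`. -/
def normalDashing (χ : ZMod 2) (e : (ZMod 2 × ZMod 2) × (ZMod 2 × ZMod 2)) : ZMod 2 :=
  if e.1 = (0, 0) ∨ e.1 = e.2 then 0
  else if e.2 = (0, 0) then 1
  else if e.2 = (e.1.1 + e.1.2, e.1.1) then χ
  else χ + 1

theorem isOddDashing_normalDashing (χ : ZMod 2) : IsOddDashing (normalDashing χ) := by
  unfold IsOddDashing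
  revert χ
  decide

theorem chiralitySum_normalDashing (χ : ZMod 2) : chiralitySum (normalDashing χ) = χ := by
  revert χ
  decide

/-- Switching the dashing of all edges at a set of vertices preserves odd dashings. -/
theorem IsOddDashing.add_vertex {d : (ZMod 2 × ZMod 2) × (ZMod 2 × ZMod 2) → ZMod 2}
    (hd : IsOddDashing d) (p q : ZMod 2 × ZMod 2 → ZMod 2) :
    IsOddDashing fun e => d e + p e.1 + q e.2 := by
  intro b s u hsu
  have h := hd b s u hsu
  grind

theorem chiralitySum_add_vertex (d : (ZMod 2 × ZMod 2) × (ZMod 2 × ZMod 2) → ZMod 2)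
    (p q : ZMod 2 × ZMod 2 → ZMod 2) :
    chiralitySum (fun e => d e + p e.1 + q e.2) = chiralitySum d := by
  simp only [chiralitySum]
  grind

/-- Every odd dashing is a vertex switch of the normal one of its chirality, with the switches
read off from its free edges. -/
theorem IsOddDashing.eq_normalDashing_add
    {d : (ZMod 2 × ZMod 2) × (ZMod 2 × ZMod 2) → ZMod 2} (hd : IsOddDashing d)
    (b f : ZMod 2 × ZMod 2) :
    d (b, f) = normalDashing (chiralitySum d) (b, f)
      + (d (b, b) + d ((0, 0), b)) + d ((0, 0), f) := by
  have color_zero (b s : ZMod 2 × ZMod 2) (hs : (0, 0) ≠ s) := hd b (0, 0) s hs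
  have h01 := color_zero (0, 0) (0, 1) (by decide)
  have h02 := color_zero (0, 0) (1, 0) (by decide)
  have h03 := color_zero (0, 0) (1, 1) (by decide)
  have h12 := color_zero (0, 1) (1, 1) (by decide)
  have h13 := color_zero (0, 1) (1, 0) (by decide)
  have h23 := color_zero (1, 0) (0, 1) (by decide)
  have k12 := hd (0, 0) (0, 1) (1, 0) (by decide)
  have k13 := hd (0, 0) (0, 1) (1, 1) (by decide)
  have two : (1 : ZMod 2) + 1 = 0 := by decide
  simp only [Prod.mk_add_mk, add_zero, zero_add, two] at h01 h02 h03 h12 h13 h23 k12 k13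
  obtain ⟨b₁, b₂⟩ := b
  obtain ⟨f₁, f₂⟩ := f
  have zero_or_one : ∀ x : ZMod 2, x = 0 ∨ x = 1 := by decide
  rcases zero_or_one b₁ with rfl | rfl <;> rcases zero_or_one b₂ with rfl | rfl <;>
    rcases zero_or_one f₁ with rfl | rfl <;> rcases zero_or_one f₂ with rfl | rfl <;>
    simp [normalDashing, chiralitySum, two] <;> grind

theorem stmt9 (χ : ZMod 2) :
    Set.BijOn freeEdges {d | IsOddDashing d ∧ chiralitySum d = χ} Set.univ := by
  refine ⟨Set.mapsTo_univ _ _, ?_, ?_⟩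
  · rintro d ⟨hd, hdχ⟩ d' ⟨hd', hdχ'⟩ h
    simp only [freeEdges, Matrix.vecCons_inj] at h
    obtain ⟨h0, h1, h2, h3, c1, c2, c3, -⟩ := h
    have diag (v : ZMod 2 × ZMod 2) : d (v, v) = d' (v, v) := by
      obtain ⟨x, y⟩ := v
      fin_cases x <;> fin_cases y <;> assumption
    have boson (v : ZMod 2 × ZMod 2) : d ((0, 0), v) = d' ((0, 0), v) := by
      obtain ⟨x, y⟩ := v
      fin_cases x <;> fin_cases y <;> assumption
    ext ⟨b, f⟩
    rw [hd.eq_normalDashing_add, hd'.eq_normalDashing_add, hdχ, hdχ', diag, boson, boson]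
  · intro a _
    let p (v : ZMod 2 × ZMod 2) : ZMod 2 :=
      if v = (0, 1) then a 1 + a 4 else if v = (1, 0) then a 2 + a 5
      else if v = (1, 1) then a 3 + a 6 else 0
    let q (v : ZMod 2 × ZMod 2) : ZMod 2 :=
      if v = (0, 1) then a 4 else if v = (1, 0) then a 5
      else if v = (1, 1) then a 6 else a 0
    refine ⟨fun e => normalDashing χ e + p e.1 + q e.2,
      ⟨(isOddDashing_normalDashing χ).add_vertex p q,
        (chiralitySum_add_vertex _ p q).trans (chiralitySum_normalDashing χ)⟩, ?_⟩
    ext i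
    fin_cases i <;> simp [freeEdges, normalDashing, p, q] <;> grind
end

section
/- The number of quadruples (L_1,L_2,L_3,L_4) of 4×4 signed permutation matrices with integer entries satisfying the garden algebra relations is exactly 36864. (Equivalently, there are exactly 36864 (4,1) valise adinkras.) -/
open Matrix

open Equiv

section SignedPerm

variable {n : ℕ}

/-- The matrix with entry `ε i` at position `(i, σ i)` and zeros elsewhere. -/
def signedPerm (σ : Perm (Fin n)) (ε : Fin n → ℤˣ) : Matrix (Fin n) (Fin n) ℤ :=
  Matrix.of fun i j => if σ i = j then (ε i : ℤ) else 0

lemma signedPerm_apply (σ : Perm (Fin n)) (ε : Fin n → ℤˣ) (i j : Fin n) :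
    signedPerm σ ε i j = if σ i = j then (ε i : ℤ) else 0 := rfl

lemma signedPerm_apply_ne_zero {σ : Perm (Fin n)} {ε : Fin n → ℤˣ} {i j : Fin n} :
    signedPerm σ ε i j ≠ 0 ↔ σ i = j := by
  simp [signedPerm_apply]

lemma isSignedPerm_signedPerm (σ : Perm (Fin n)) (ε : Fin n → ℤˣ) :
    IsSignedPerm (signedPerm σ ε) := by
  refine ⟨fun i j => ?_, fun i => ?_, fun j => ?_⟩
  · rw [signedPerm_apply]
    split_ifs
    · rcases Int.units_eq_one_or (ε i) with h | h <;> simp [h]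
    · simp
  · exact ⟨σ i, signedPerm_apply_ne_zero.2 rfl, fun j hj => (signedPerm_apply_ne_zero.1 hj).symm⟩
  · refine ⟨σ.symm j, signedPerm_apply_ne_zero.2 (by simp), fun i hi => ?_⟩
    rw [← signedPerm_apply_ne_zero.1 hi, symm_apply_apply]

lemma IsSignedPerm.exists_eq_signedPerm {M : Matrix (Fin n) (Fin n) ℤ} (hM : IsSignedPerm M) :
    ∃ σ ε, signedPerm σ ε = M := by
  obtain ⟨hval, hrow, hcol⟩ := hM
  choose f hf hf' using hrow
  have hinj : Function.Injective f := fun i i' h =>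
    (hcol (f i)).unique (hf i) (h ▸ hf i')
  have hunit : ∀ i, IsUnit (M i (f i)) := fun i => by
    rcases hval i (f i) with h | h | h
    · exact absurd h (hf i)
    all_goals simp [h]
  refine ⟨Equiv.ofBijective f (Finite.injective_iff_bijective.1 hinj),
    fun i => (hunit i).unit, ?_⟩
  ext i j
  rw [signedPerm_apply]
  split_ifs with h
  · simp [← h]
  · by_contra hne
    exact h (hf' i j (Ne.symm hne)).symm

lemma signedPerm_injective :
    Function.Injective fun p : Perm (Fin n) × (Fin n → ℤˣ) => signedPerm p.1 p.2 := by
  rintro ⟨σ, ε⟩ ⟨τ, δ⟩ h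
  have hentry : ∀ i j, signedPerm σ ε i j = signedPerm τ δ i j := fun i j =>
    congrFun (congrFun h i) j
  have hσ : σ = τ := by
    ext i : 1
    refine (signedPerm_apply_ne_zero (ε := δ) |>.1 ?_).symm
    rw [← hentry]
    exact signedPerm_apply_ne_zero.2 rfl
  subst hσ
  have hε : ε = δ := by
    ext i
    simpa [signedPerm_apply] using hentry i (σ i)
  rw [hε]

lemma card_isSignedPerm :
    Nat.card {M : Matrix (Fin n) (Fin n) ℤ // IsSignedPerm M} = n.factorial * 2 ^ n := by
  have e : Perm (Fin n) × (Fin n → ℤˣ) ≃ {M : Matrix (Fin n) (Fin n) ℤ // IsSignedPerm M} :=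
    Equiv.ofBijective (fun p => ⟨signedPerm p.1 p.2, isSignedPerm_signedPerm _ _⟩)
      ⟨fun p q h => signedPerm_injective (congrArg Subtype.val h), fun ⟨M, hM⟩ => by
        obtain ⟨σ, ε, h⟩ := hM.exists_eq_signedPerm
        exact ⟨(σ, ε), Subtype.ext h⟩⟩
  rw [← Nat.card_congr e, Nat.card_eq_fintype_card]
  simp [Fintype.card_perm]

lemma signedPerm_mul (σ τ : Perm (Fin n)) (ε δ : Fin n → ℤˣ) :
    signedPerm σ ε * signedPerm τ δ = signedPerm (τ * σ) fun i => ε i * δ (σ i) := by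
  ext i j
  simp only [Matrix.mul_apply, signedPerm_apply]
  rw [Finset.sum_eq_single (σ i) (fun k _ hk => by simp [hk.symm]) (by simp)]
  simp only [if_true, Perm.mul_apply, mul_ite, mul_zero, Units.val_mul]
  rfl

lemma signedPerm_transpose (σ : Perm (Fin n)) (ε : Fin n → ℤˣ) :
    (signedPerm σ ε)ᵀ = signedPerm σ⁻¹ fun i => ε (σ⁻¹ i) := by
  ext i j
  simp only [Matrix.transpose_apply, signedPerm_apply, Perm.inv_eq_iff_eq, eq_comm (a := i)]
  split_ifs with h
  · simp [← h]
  · rfl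

lemma signedPerm_one : signedPerm (1 : Perm (Fin n)) 1 = 1 := by
  ext i j
  simp only [signedPerm_apply, Matrix.one_apply, Perm.one_apply, Pi.one_apply, Units.val_one]
  rfl

lemma IsSignedPerm.mul {M N : Matrix (Fin n) (Fin n) ℤ} (hM : IsSignedPerm M)
    (hN : IsSignedPerm N) : IsSignedPerm (M * N) := by
  obtain ⟨σ, ε, rfl⟩ := hM.exists_eq_signedPerm
  obtain ⟨τ, δ, rfl⟩ := hN.exists_eq_signedPerm
  rw [signedPerm_mul]
  exact isSignedPerm_signedPerm _ _

lemma IsSignedPerm.transpose {M : Matrix (Fin n) (Fin n) ℤ} (hM : IsSignedPerm M) :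
    IsSignedPerm Mᵀ := by
  obtain ⟨σ, ε, rfl⟩ := hM.exists_eq_signedPerm
  rw [signedPerm_transpose]
  exact isSignedPerm_signedPerm _ _

lemma IsSignedPerm.mul_transpose {M : Matrix (Fin n) (Fin n) ℤ} (hM : IsSignedPerm M) :
    M * Mᵀ = 1 := by
  obtain ⟨σ, ε, rfl⟩ := hM.exists_eq_signedPerm
  rw [signedPerm_transpose, signedPerm_mul, ← signedPerm_one]
  congr 1
  · simp
  · ext i
    simp

lemma IsSignedPerm.transpose_mul {M : Matrix (Fin n) (Fin n) ℤ} (hM : IsSignedPerm M) :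
    Mᵀ * M = 1 := by
  simpa using hM.transpose.mul_transpose

end SignedPerm

section Normalization

variable {n N : ℕ}

/-- A family of skew-symmetric, pairwise anticommuting signed permutation matrices. -/
def IsSkewFrame (A : Fin N → Matrix (Fin n) (Fin n) ℤ) : Prop :=
  (∀ I, IsSignedPerm (A I) ∧ (A I)ᵀ = -A I) ∧
    Pairwise fun I J => A I * A J + A J * A I = 0

/-- For signed permutation matrices the diagonal garden relations hold automatically. -/
lemma gardenRel_iff {L : Fin N → Matrix (Fin n) (Fin n) ℤ} (hL : ∀ I, IsSignedPerm (L I)) :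
    GardenRel L ↔ Pairwise fun I J =>
      L I * (L J)ᵀ + L J * (L I)ᵀ = 0 ∧ (L I)ᵀ * L J + (L J)ᵀ * L I = 0 := by
  refine ⟨fun h I J hIJ => by simpa [hIJ] using h I J, fun h I J => ?_⟩
  by_cases hIJ : I = J
  · subst hIJ
    simp [(hL I).mul_transpose, (hL I).transpose_mul, two_smul]
  · simpa [hIJ] using h hIJ

lemma isSkewFrame_of_gardenRel {L : Fin (N + 1) → Matrix (Fin n) (Fin n) ℤ}
    (hL : ∀ I, IsSignedPerm (L I)) (h : GardenRel L) :
    IsSkewFrame fun I : Fin N => (L 0)ᵀ * L I.succ := by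
  rw [gardenRel_iff hL] at h
  have hskew : ∀ I : Fin N, ((L 0)ᵀ * L I.succ)ᵀ = -((L 0)ᵀ * L I.succ) := fun I => by
    rw [Matrix.transpose_mul, Matrix.transpose_transpose]
    exact eq_neg_of_add_eq_zero_left (h (Fin.succ_ne_zero I)).2
  refine ⟨fun I => ⟨(hL 0).transpose.mul (hL _), hskew I⟩, fun I J hIJ => ?_⟩
  have hprod : ∀ K M : Fin N, (L 0)ᵀ * L K.succ * ((L 0)ᵀ * L M.succ) =
      -((L K.succ)ᵀ * L M.succ) := fun K M => by
    rw [← neg_eq_iff_eq_neg.2 (hskew K), Matrix.transpose_mul, Matrix.transpose_transpose,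
      neg_mul, Matrix.mul_assoc, ← Matrix.mul_assoc (L 0), (hL 0).mul_transpose, Matrix.one_mul]
  beta_reduce
  rw [hprod, hprod, ← neg_add, (h (fun e => hIJ (Fin.succ_injective _ e))).2, neg_zero]

lemma IsSkewFrame.gardenRel_cons {P : Matrix (Fin n) (Fin n) ℤ} (hP : IsSignedPerm P)
    {A : Fin N → Matrix (Fin n) (Fin n) ℤ} (hA : IsSkewFrame A) :
    GardenRel (Fin.cons P fun I => P * A I : Fin (N + 1) → Matrix (Fin n) (Fin n) ℤ) := by
  have hmul : ∀ B C : Matrix (Fin n) (Fin n) ℤ, P * B * (C * Pᵀ) = P * (B * C) * Pᵀ :=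
    fun B C => by simp only [Matrix.mul_assoc]
  have hmul' : ∀ B C : Matrix (Fin n) (Fin n) ℤ, B * Pᵀ * (P * C) = B * C := fun B C => by
    rw [Matrix.mul_assoc, ← Matrix.mul_assoc Pᵀ, hP.transpose_mul, Matrix.one_mul]
  rw [gardenRel_iff]
  · intro I J hIJ
    cases I using Fin.cases with
    | zero =>
      cases J using Fin.cases with
      | zero => exact absurd rfl hIJ
      | succ J =>
        simp [Matrix.transpose_mul, (hA.1 J).2, ← Matrix.mul_assoc, hP.transpose_mul]
        simp [Matrix.mul_assoc, hP.transpose_mul]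
    | succ I =>
      cases J using Fin.cases with
      | zero =>
        simp [Matrix.transpose_mul, (hA.1 I).2, ← Matrix.mul_assoc, hP.transpose_mul]
        simp [Matrix.mul_assoc, hP.transpose_mul]
      | succ J =>
        have hanti := hA.2 (fun e => hIJ (congrArg Fin.succ e))
        simp only [Fin.cons_succ, Matrix.transpose_mul, (hA.1 _).2, hmul, hmul']
        refine ⟨?_, ?_⟩
        · rw [← Matrix.add_mul, ← Matrix.mul_add, mul_neg, mul_neg, ← neg_add, hanti]
          simp
        · rw [neg_mul, neg_mul, ← neg_add, hanti, neg_zero]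
  · intro I
    cases I using Fin.cases with
    | zero => exact hP
    | succ I => exact hP.mul (hA.1 I).1

/-- Dividing a garden family by its first matrix. -/
def gardenEquiv :
    {L : Fin (N + 1) → Matrix (Fin n) (Fin n) ℤ // (∀ I, IsSignedPerm (L I)) ∧ GardenRel L} ≃
      {P : Matrix (Fin n) (Fin n) ℤ // IsSignedPerm P} ×
        {A : Fin N → Matrix (Fin n) (Fin n) ℤ // IsSkewFrame A} where
  toFun L := (⟨L.1 0, L.2.1 0⟩, ⟨_, isSkewFrame_of_gardenRel L.2.1 L.2.2⟩)
  invFun p := ⟨Fin.cons p.1.1 fun I => p.1.1 * p.2.1 I,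
    Fin.cases p.1.2 fun I => p.1.2.mul (p.2.2.1 I).1, p.2.2.gardenRel_cons p.1.2⟩
  left_inv L := by
    ext1
    funext I
    cases I using Fin.cases with
    | zero => rfl
    | succ I => simp [← Matrix.mul_assoc, (L.2.1 0).mul_transpose]
  right_inv p := by
    refine Prod.ext rfl (Subtype.ext (funext fun I => ?_))
    simp [← Matrix.mul_assoc, p.1.2.transpose_mul]

end Normalization

section Quaternions

/-- Multiplication by a quaternion unit `i`, `j`, `k` on the left (`true`) or on the
right (`false`), in the basis `1, i, j, k`. -/
def quaternionMatrix : Bool → Fin 3 → Matrix (Fin 4) (Fin 4) ℤ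
  | true => ![!![0, -1, 0, 0; 1, 0, 0, 0; 0, 0, 0, -1; 0, 0, 1, 0],
      !![0, 0, -1, 0; 0, 0, 0, 1; 1, 0, 0, 0; 0, -1, 0, 0],
      !![0, 0, 0, -1; 0, 0, -1, 0; 0, 1, 0, 0; 1, 0, 0, 0]]
  | false => ![!![0, -1, 0, 0; 1, 0, 0, 0; 0, 0, 0, 1; 0, 0, -1, 0],
      !![0, 0, -1, 0; 0, 0, 0, -1; 1, 0, 0, 0; 0, 1, 0, 0],
      !![0, 0, 0, -1; 0, 0, 1, 0; 0, -1, 0, 0; 1, 0, 0, 0]]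

/-- The matrix `± quaternionMatrix b a`. -/
def signedQuaternionMatrix (q : Bool × Fin 3 × ℤˣ) : Matrix (Fin 4) (Fin 4) ℤ :=
  (q.2.2 : ℤ) • quaternionMatrix q.1 q.2.1

lemma signedQuaternionMatrix_injective : Function.Injective signedQuaternionMatrix := by
  unfold Function.Injective
  decide +kernel

lemma signedQuaternionMatrix_transpose (q : Bool × Fin 3 × ℤˣ) :
    (signedQuaternionMatrix q)ᵀ = -signedQuaternionMatrix q := by
  revert q
  decide +kernel

lemma signedQuaternionMatrix_anticomm_iff (p q : Bool × Fin 3 × ℤˣ) :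
    signedQuaternionMatrix p * signedQuaternionMatrix q +
      signedQuaternionMatrix q * signedQuaternionMatrix p = 0 ↔ p.1 = q.1 ∧ p.2.1 ≠ q.2.1 := by
  revert p q
  decide +kernel

lemma isSignedPerm_signedQuaternionMatrix (q : Bool × Fin 3 × ℤˣ) :
    IsSignedPerm (signedQuaternionMatrix q) := by
  obtain ⟨σ, ε, h⟩ : ∃ σ ε, signedPerm σ ε = signedQuaternionMatrix q := by
    revert q
    decide +kernel
  exact h ▸ isSignedPerm_signedPerm σ ε

lemma exists_signedQuaternionMatrix_eq {M : Matrix (Fin 4) (Fin 4) ℤ} (hM : IsSignedPerm M)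
    (hskew : Mᵀ = -M) : ∃ q, signedQuaternionMatrix q = M := by
  obtain ⟨σ, ε, rfl⟩ := hM.exists_eq_signedPerm
  clear hM
  revert σ ε
  decide +kernel

/-- Pairwise anticommuting triples are the orderings and sign choices of `i, j, k` acting
on a common side. -/
lemma card_isSkewFrame :
    Nat.card {A : Fin 3 → Matrix (Fin 4) (Fin 4) ℤ // IsSkewFrame A} = 96 := by
  let f : Bool × Perm (Fin 3) × (Fin 3 → ℤˣ) →
      {A : Fin 3 → Matrix (Fin 4) (Fin 4) ℤ // IsSkewFrame A} := fun p =>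
    ⟨fun I => signedQuaternionMatrix (p.1, p.2.1 I, p.2.2 I),
      fun I => ⟨isSignedPerm_signedQuaternionMatrix _, signedQuaternionMatrix_transpose _⟩,
      fun I J hIJ => (signedQuaternionMatrix_anticomm_iff _ _).2
        ⟨rfl, fun h => hIJ (p.2.1.injective h)⟩⟩
  have hf : Function.Bijective f := by
    constructor
    · rintro ⟨b, σ, ε⟩ ⟨c, τ, δ⟩ h
      have hentry : ∀ I, (b, σ I, ε I) = (c, τ I, δ I) := fun I =>
        signedQuaternionMatrix_injective (congrFun (congrArg Subtype.val h) I)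
      simp only [Prod.mk.injEq] at hentry ⊢
      exact ⟨(hentry 0).1, Equiv.ext fun I => (hentry I).2.1, funext fun I => (hentry I).2.2⟩
    · rintro ⟨A, hA, hanti⟩
      choose q hq using fun I => exists_signedQuaternionMatrix_eq (hA I).1 (hA I).2
      obtain rfl : (fun I => signedQuaternionMatrix (q I)) = A := funext hq
      have hpair : ∀ I J, I ≠ J → (q I).1 = (q J).1 ∧ (q I).2.1 ≠ (q J).2.1 :=
        fun I J hIJ => (signedQuaternionMatrix_anticomm_iff _ _).1 (hanti hIJ)
      have hside : ∀ I, (q 0).1 = (q I).1 := fun I => by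
        by_cases h : 0 = I
        · rw [h]
        · exact (hpair 0 I h).1
      have hinj : Function.Injective fun I => (q I).2.1 := fun I J h => by
        by_contra hIJ
        exact (hpair I J hIJ).2 h
      refine ⟨((q 0).1, Equiv.ofBijective _ (Finite.injective_iff_bijective.1 hinj),
        fun I => (q I).2.2), Subtype.ext (funext fun I => ?_)⟩
      simp [f, hside I]
  rw [← Nat.card_congr (Equiv.ofBijective f hf), Nat.card_eq_fintype_card]
  simp [Fintype.card_perm, Nat.factorial]

end Quaternions

theorem stmt10 :
    Nat.card {L : Fin 4 → Matrix (Fin 4) (Fin 4) ℤ // IsAdinkra L} = 36864 := by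
  refine (Nat.card_congr gardenEquiv).trans ?_
  rw [Nat.card_prod, card_isSignedPerm, card_isSkewFrame]
  decide
end

section
/- For all quadruples A = (L_1,L_2,L_3,L_4) and A' = (L'_1,L'_2,L'_3,L'_4) encoding (4,1) valise adinkras, the integer Σ_{I≠J} trace(L_Iᵀ·L_J·L'_Iᵀ·L'_J) (the sum over all ordered pairs of distinct I,J ∈ {1,2,3,4}) lies in the set {0, 16, −16, −48}; equivalently, the gadget OG(A,A') takes only the four values 1, 1/3, −1/3, 0. -/
open Matrix

/-- `Σ_{I≠J} trace(L_Iᵀ·L_J·L'_Iᵀ·L'_J)`, summed over ordered pairs of distinct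
`I, J ∈ {1,2,3,4}`; the gadget is `OG(A,A') = -(1/48)` times this quantity. -/
def gadgetSum (L L' : Fin 4 → Matrix (Fin 4) (Fin 4) ℤ) : ℤ :=
  ∑ I : Fin 4, ∑ J : Fin 4,
    if I ≠ J then Matrix.trace ((L I)ᵀ * L J * (L' I)ᵀ * L' J) else 0

/-- The skew-symmetric `4 × 4` matrix with first row `(0, u)` that is self-dual for `κ = 1` and
anti-self-dual for `κ = -1`. -/
def dualSkew (κ : ℤ) (u : Fin 3 → ℤ) : Matrix (Fin 4) (Fin 4) ℤ :=
  !![0, u 0, u 1, u 2;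
    -u 0, 0, κ * u 2, -(κ * u 1);
    -u 1, -(κ * u 2), 0, κ * u 0;
    -u 2, κ * u 1, -(κ * u 0), 0]

lemma dualSkew_transpose (κ : ℤ) (u : Fin 3 → ℤ) : (dualSkew κ u)ᵀ = dualSkew κ (-u) := by
  ext i j
  fin_cases i <;> fin_cases j <;> simp [dualSkew]

lemma dualSkew_mul (κ : ℤ) (hκ : κ * κ = 1) (u v : Fin 3 → ℤ) :
    dualSkew κ u * dualSkew κ v =
      -((u ⬝ᵥ v) • (1 : Matrix (Fin 4) (Fin 4) ℤ)) + dualSkew κ (-(κ • (u ⨯₃ v))) := by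
  ext i j
  fin_cases i <;> fin_cases j <;>
    simp [dualSkew, Matrix.mul_apply, Fin.sum_univ_succ, dotProduct, cross_apply,
      -zsmul_eq_mul, -zsmul_one] <;> grind

lemma trace_dualSkew_mul (κ κ' : ℤ) (u v : Fin 3 → ℤ) :
    trace (dualSkew κ u * dualSkew κ' v) = -2 * (1 + κ * κ') * (u ⬝ᵥ v) := by
  simp [dualSkew, Matrix.trace, Fin.sum_univ_succ, dotProduct]
  ring

lemma dualSkew_commute (κ : ℤ) (hκ : κ * κ = 1) (u v : Fin 3 → ℤ) :
    dualSkew κ u * dualSkew (-κ) v = dualSkew (-κ) v * dualSkew κ u := by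
  ext i j
  fin_cases i <;> fin_cases j <;>
    simp [dualSkew, Matrix.mul_apply, Fin.sum_univ_succ] <;> grind

/-- An integer vector of length one in `ℤ³` is a signed coordinate vector. -/
lemma sq_sum_eq_one_cases {a b c : ℤ} (h : a * a + b * b + c * c = 1) :
    ((a = 1 ∨ a = -1) ∧ b = 0 ∧ c = 0) ∨ (a = 0 ∧ (b = 1 ∨ b = -1) ∧ c = 0) ∨
      (a = 0 ∧ b = 0 ∧ (c = 1 ∨ c = -1)) := by
  have ha : -1 ≤ a ∧ a ≤ 1 := by constructor <;> nlinarith [mul_self_nonneg b, mul_self_nonneg c]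
  have hb : -1 ≤ b ∧ b ≤ 1 := by constructor <;> nlinarith [mul_self_nonneg a, mul_self_nonneg c]
  have hc : -1 ≤ c ∧ c ≤ 1 := by constructor <;> nlinarith [mul_self_nonneg a, mul_self_nonneg b]
  obtain ⟨ha₁, ha₂⟩ := ha
  obtain ⟨hb₁, hb₂⟩ := hb
  obtain ⟨hc₁, hc₂⟩ := hc
  interval_cases a <;> interval_cases b <;> interval_cases c <;> simp_all

/-- Every skew-symmetric orthogonal integer `4 × 4` matrix is self-dual or anti-self-dual. -/
lemma exists_eq_dualSkew {M : Matrix (Fin 4) (Fin 4) ℤ} (hs : Mᵀ = -M) (ho : Mᵀ * M = 1) :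
    ∃ κ : ℤ, ∃ u : Fin 3 → ℤ, (κ = 1 ∨ κ = -1) ∧ u ⬝ᵥ u = 1 ∧ M = dualSkew κ u := by
  have hskew (i j) : M j i = -M i j := congrFun (congrFun hs i) j
  have hdiag (i) : M i i = 0 := by have := hskew i i; lia
  have horth (i) : ∑ k, M k i * M k i = 1 := by
    simpa [Matrix.mul_apply] using congrFun (congrFun ho i) i
  have h₀ := horth 0
  have h₁ := horth 1
  have h₂ := horth 2
  have h₃ := horth 3
  simp only [Fin.sum_univ_four, hdiag, hskew 0 1, hskew 0 2, hskew 0 3, hskew 1 2, hskew 1 3,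
    hskew 2 3] at h₀ h₁ h₂ h₃
  have hM (κ : ℤ) (h12 : M 1 2 = κ * M 0 3) (h13 : M 1 3 = -(κ * M 0 2))
      (h23 : M 2 3 = κ * M 0 1) : M = dualSkew κ ![M 0 1, M 0 2, M 0 3] := by
    ext i j
    fin_cases i <;> fin_cases j <;>
      simp [dualSkew, hdiag, hskew 0 1, hskew 0 2, hskew 0 3, hskew 1 2, hskew 1 3, hskew 2 3,
        h12, h13, h23]
  have hrow : M 0 1 * M 0 1 + M 0 2 * M 0 2 + M 0 3 * M 0 3 = 1 := by linarith
  have hdual : ∃ κ : ℤ, (κ = 1 ∨ κ = -1) ∧ M 1 2 = κ * M 0 3 ∧ M 1 3 = -(κ * M 0 2) ∧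
      M 2 3 = κ * M 0 1 := by
    have e23 : M 2 3 * M 2 3 = M 0 1 * M 0 1 := by linarith
    have e13 : M 1 3 * M 1 3 = M 0 2 * M 0 2 := by linarith
    have e12 : M 1 2 * M 1 2 = M 0 3 * M 0 3 := by linarith
    rw [mul_self_eq_mul_self_iff] at e12 e13 e23
    rcases sq_sum_eq_one_cases hrow with ⟨-, hb, hc⟩ | ⟨ha, -, hc⟩ | ⟨ha, hb, -⟩
    · rcases e23 with h | h
      · exact ⟨1, by grind⟩
      · exact ⟨-1, by grind⟩
    · rcases e13 with h | h
      · exact ⟨-1, by grind⟩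
      · exact ⟨1, by grind⟩
    · rcases e12 with h | h
      · exact ⟨1, by grind⟩
      · exact ⟨-1, by grind⟩
  obtain ⟨κ, hκ, h12, h13, h23⟩ := hdual
  refine ⟨κ, _, hκ, ?_, hM κ h12 h13 h23⟩
  simpa [dotProduct, Fin.sum_univ_succ, ← add_assoc] using hrow

/-- Anticommuting (anti-)self-dual complex structures have the same duality and are orthogonal. -/
lemma dualSkew_anticommute {κ κ' : ℤ} {u v : Fin 3 → ℤ} (hκ : κ = 1 ∨ κ = -1)
    (hκ' : κ' = 1 ∨ κ' = -1) (hu : u ⬝ᵥ u = 1) (hv : v ⬝ᵥ v = 1)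
    (h : dualSkew κ u * dualSkew κ' v + dualSkew κ' v * dualSkew κ u = 0) :
    κ' = κ ∧ u ⬝ᵥ v = 0 := by
  have hsq {κ : ℤ} (hκ : κ = 1 ∨ κ = -1) : κ * κ = 1 := by rcases hκ with rfl | rfl <;> rfl
  constructor
  · by_contra hne
    obtain rfl : κ' = -κ := by lia
    rw [← dualSkew_commute κ (hsq hκ), ← two_smul ℤ, smul_eq_zero_iff_right two_ne_zero] at h
    have hsq_u : dualSkew κ u * dualSkew κ u = -1 := by
      rw [dualSkew_mul κ (hsq hκ), hu, cross_self]
      ext i j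
      fin_cases i <;> fin_cases j <;> simp [dualSkew]
    have hzero : dualSkew (-κ) v = 0 := by
      have := congrArg (dualSkew κ u * ·) h
      simpa [← Matrix.mul_assoc, hsq_u] using this
    have ht := trace_dualSkew_mul (-κ) (-κ) v v
    rw [hzero, hv, hsq hκ'] at ht
    simp at ht
  · have h₀ := congrFun (congrFun h 0) 0
    simp [dualSkew] at h₀
    simp [dotProduct, Fin.sum_univ_succ]
    linarith

/-- The sum of the trace and the second elementary symmetric function of an orthogonal integer
`3 × 3` matrix. -/
lemma trace_add_minors_mem {G : Matrix (Fin 3) (Fin 3) ℤ} (hG : G * Gᵀ = 1) :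
    G 0 0 + G 1 1 + G 2 2 + (G 0 0 * G 1 1 - G 0 1 * G 1 0) + (G 0 0 * G 2 2 - G 0 2 * G 2 0) +
      (G 1 1 * G 2 2 - G 1 2 * G 2 1) ∈ ({0, 2, -2, 6} : Set ℤ) := by
  have hrow (i j) : G i 0 * G j 0 + G i 1 * G j 1 + G i 2 * G j 2 = if i = j then 1 else 0 := by
    simpa [Matrix.mul_apply, Fin.sum_univ_three, Matrix.one_apply] using
      congrFun (congrFun hG i) j
  have h01 := hrow 0 1
  have h02 := hrow 0 2
  have h12 := hrow 1 2
  simp only [Fin.reduceEq, if_false] at h01 h02 h12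
  rcases sq_sum_eq_one_cases (by simpa using hrow 0 0) with
      ⟨h | h, h', h''⟩ | ⟨h, h' | h', h''⟩ | ⟨h, h', h'' | h''⟩ <;>
    rcases sq_sum_eq_one_cases (by simpa using hrow 1 1) with
      ⟨k | k, k', k''⟩ | ⟨k, k' | k', k''⟩ | ⟨k, k', k'' | k''⟩ <;>
    simp only [h, h', h'', k, k', k''] at h01 h02 h12 ⊢ <;> norm_num at h01 <;>
    rcases sq_sum_eq_one_cases (by simpa using hrow 2 2) with
      ⟨l | l, l', l''⟩ | ⟨l, l' | l', l''⟩ | ⟨l, l', l'' | l''⟩ <;>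
    simp [l, l', l''] at h02 h12 ⊢

lemma GardenRel.mul_transpose_self {d N : ℕ} {L : Fin N → Matrix (Fin d) (Fin d) ℤ}
    (hL : GardenRel L) (I : Fin N) : L I * (L I)ᵀ = 1 := by
  have h := (hL I I).1
  rw [if_pos rfl, ← two_smul ℤ] at h
  exact smul_right_injective _ two_ne_zero h

lemma GardenRel.transpose_mul_cancel {d N : ℕ} {L : Fin N → Matrix (Fin d) (Fin d) ℤ}
    (hL : GardenRel L) (I J K : Fin N) :
    ((L K)ᵀ * L I)ᵀ * ((L K)ᵀ * L J) = (L I)ᵀ * L J := by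
  rw [transpose_mul, transpose_transpose, Matrix.mul_assoc, ← Matrix.mul_assoc (L K),
    hL.mul_transpose_self, Matrix.one_mul]

/-- In a garden algebra, the products `L₀ᵀ L_I` with `I ≠ 0` are given by an orthonormal frame of
`ℤ³`, all with the same duality. -/
lemma GardenRel.exists_frame {L : Fin 4 → Matrix (Fin 4) (Fin 4) ℤ} (hL : GardenRel L) :
    ∃ κ : ℤ, ∃ U : Matrix (Fin 3) (Fin 3) ℤ, (κ = 1 ∨ κ = -1) ∧ U * Uᵀ = 1 ∧
      ∀ n : Fin 3, (L 0)ᵀ * L n.succ = dualSkew κ (U n) := by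
  have hskew (n : Fin 3) : ((L 0)ᵀ * L n.succ)ᵀ = -((L 0)ᵀ * L n.succ) := by
    have h := (hL 0 n.succ).2
    rw [if_neg (Fin.succ_ne_zero n).symm, add_comm] at h
    simpa using eq_neg_of_add_eq_zero_left h
  have horth (n : Fin 3) : ((L 0)ᵀ * L n.succ)ᵀ * ((L 0)ᵀ * L n.succ) = 1 := by
    rw [hL.transpose_mul_cancel]
    exact mul_eq_one_comm.mp (hL.mul_transpose_self _)
  choose κ U hκ hU hM using fun n => exists_eq_dualSkew (hskew n) (horth n)
  have hanti (m n : Fin 3) (hmn : m ≠ n) : κ n = κ m ∧ U m ⬝ᵥ U n = 0 := by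
    refine dualSkew_anticommute (hκ m) (hκ n) (hU m) (hU n) ?_
    have h := (hL m.succ n.succ).2
    rw [if_neg (by simpa using hmn), ← hL.transpose_mul_cancel m.succ n.succ 0,
      ← hL.transpose_mul_cancel n.succ m.succ 0, hskew, hskew, Matrix.neg_mul, Matrix.neg_mul,
      ← neg_add, neg_eq_zero, hM, hM] at h
    exact h
  refine ⟨κ 0, Matrix.of U, hκ 0, ?_, fun n => ?_⟩
  · ext m n
    rw [Matrix.one_apply, Matrix.mul_apply]
    split_ifs with hmn
    · subst hmn
      exact hU m
    · exact (hanti m n hmn).2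
  · have hn : κ n = κ 0 := by
      by_cases h : (0 : Fin 3) = n
      · rw [h]
      · exact (hanti 0 n h).1
    rw [hM, hn]
    rfl

lemma gadgetSum_eq_of_frame {L L' : Fin 4 → Matrix (Fin 4) (Fin 4) ℤ} (hL : GardenRel L)
    (hL' : GardenRel L') {κ κ' : ℤ} {U U' : Matrix (Fin 3) (Fin 3) ℤ}
    (hκ : κ * κ = 1) (hκ' : κ' * κ' = 1) (hU : U * Uᵀ = 1) (hU' : U' * U'ᵀ = 1)
    (hM : ∀ n : Fin 3, (L 0)ᵀ * L n.succ = dualSkew κ (U n))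
    (hM' : ∀ n : Fin 3, (L' 0)ᵀ * L' n.succ = dualSkew κ' (U' n)) :
    gadgetSum L L' = -2 * (1 + κ * κ') * (2 * ∑ n, U n ⬝ᵥ U' n +
      κ * κ' * ∑ m, ∑ n, (U m ⨯₃ U n) ⬝ᵥ (U' m ⨯₃ U' n)) := by
  have hpair {L : Fin 4 → Matrix (Fin 4) (Fin 4) ℤ} (hL : GardenRel L) {κ : ℤ}
      {U : Matrix (Fin 3) (Fin 3) ℤ} (hκ : κ * κ = 1) (hU : U * Uᵀ = 1)
      (hM : ∀ n : Fin 3, (L 0)ᵀ * L n.succ = dualSkew κ (U n)) (m n : Fin 3) (hmn : m ≠ n) :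
      (L m.succ)ᵀ * L n.succ = dualSkew κ (κ • (U m ⨯₃ U n)) := by
    have hdot : U m ⬝ᵥ U n = 0 := by
      have h := congrFun (congrFun hU m) n
      rwa [Matrix.one_apply_ne hmn, Matrix.mul_apply] at h
    rw [← hL.transpose_mul_cancel _ _ 0, hM, hM, dualSkew_transpose, dualSkew_mul κ hκ,
      neg_dotProduct, hdot, map_neg, LinearMap.neg_apply, smul_neg, neg_neg, neg_zero, zero_smul,
      neg_zero, zero_add]
  have hrev {L : Fin 4 → Matrix (Fin 4) (Fin 4) ℤ} {κ : ℤ} {U : Matrix (Fin 3) (Fin 3) ℤ}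
      (hM : ∀ n : Fin 3, (L 0)ᵀ * L n.succ = dualSkew κ (U n)) (n : Fin 3) :
      (L n.succ)ᵀ * L 0 = dualSkew κ (-U n) := by
    rw [← dualSkew_transpose, ← hM, transpose_mul, transpose_transpose]
  have hinner (m n : Fin 3) :
      (if m.succ ≠ n.succ then
        trace ((L m.succ)ᵀ * L n.succ * (L' m.succ)ᵀ * L' n.succ) else 0) =
      -2 * (1 + κ * κ') * (κ * κ' * ((U m ⨯₃ U n) ⬝ᵥ (U' m ⨯₃ U' n))) := by
    by_cases hmn : m = n
    · simp [hmn]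
    · rw [if_pos (by simpa using hmn), Matrix.mul_assoc, hpair hL hκ hU hM m n hmn,
        hpair hL' hκ' hU' hM' m n hmn, trace_dualSkew_mul, smul_dotProduct, dotProduct_smul,
        smul_eq_mul, smul_eq_mul]
      ring
  have houter (n : Fin 3) : trace ((L 0)ᵀ * L n.succ * (L' 0)ᵀ * L' n.succ) =
      -2 * (1 + κ * κ') * (U n ⬝ᵥ U' n) := by
    rw [Matrix.mul_assoc, hM, hM', trace_dualSkew_mul]
  have houter' (n : Fin 3) : trace ((L n.succ)ᵀ * L 0 * (L' n.succ)ᵀ * L' 0) =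
      -2 * (1 + κ * κ') * (U n ⬝ᵥ U' n) := by
    rw [Matrix.mul_assoc, hrev hM, hrev hM', trace_dualSkew_mul, neg_dotProduct_neg]
  rw [gadgetSum, Fin.sum_univ_succ]
  simp_rw [Fin.sum_univ_succ (n := 3), hinner, houter, houter']
  simp only [ne_eq, not_true_eq_false, if_false, Fin.succ_ne_zero, (Fin.succ_ne_zero _).symm,
    not_false_eq_true, if_true, Finset.sum_add_distrib, ← Finset.mul_sum]
  ring

theorem stmt14 (L L' : Fin 4 → Matrix (Fin 4) (Fin 4) ℤ)
    (hL : IsAdinkra L) (hL' : IsAdinkra L') :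
    gadgetSum L L' ∈ ({0, 16, -16, -48} : Set ℤ) := by
  obtain ⟨κ, U, hκ, hU, hM⟩ := hL.2.exists_frame
  obtain ⟨κ', U', hκ', hU', hM'⟩ := hL'.2.exists_frame
  have hκκ : κ * κ = 1 := by rcases hκ with rfl | rfl <;> rfl
  have hκκ' : κ' * κ' = 1 := by rcases hκ' with rfl | rfl <;> rfl
  rw [gadgetSum_eq_of_frame hL.2 hL'.2 hκκ hκκ' hU hU' hM hM']
  have hprod : κ * κ' = 1 ∨ κ * κ' = -1 := by
    rcases hκ with rfl | rfl <;> rcases hκ' with rfl | rfl <;> simp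
  rcases hprod with h | h
  · have hG : (U * U'ᵀ) * (U * U'ᵀ)ᵀ = 1 := by
      rw [transpose_mul, transpose_transpose, Matrix.mul_assoc, ← Matrix.mul_assoc U'ᵀ,
        mul_eq_one_comm.mp hU', Matrix.one_mul, hU]
    have hentry (m n) : U m ⬝ᵥ U' n = (U * U'ᵀ) m n := rfl
    have hmem := trace_add_minors_mem hG
    simp only [h, cross_dot_cross, hentry, Fin.sum_univ_three]
    simp only [Set.mem_insert_iff, Set.mem_singleton_iff] at hmem ⊢
    generalize U * U'ᵀ = G at hmem ⊢
    rcases hmem with hmem | hmem | hmem | hmem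
    · exact Or.inl (by linear_combination -8 * hmem)
    · exact Or.inr (Or.inr (Or.inl (by linear_combination -8 * hmem)))
    · exact Or.inr (Or.inl (by linear_combination -8 * hmem))
    · exact Or.inr (Or.inr (Or.inr (by linear_combination -8 * hmem)))
  · simp [h]
end
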